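/- Let f : Fin k → ℝ with Σ_a f a = 1, and let G = (A, W_f) be a k-colored game whose goal W_f is the set of all color sequences with frequency vector f. Then G is determined, and if player 1 has a winning strategy, then player 1 has a memoryless winning strategy. -/

import Mathlib

open Filter Topology

/-- Number of indices `i < n` with `x i = a`. -/
def cnt {k : ℕ} (x : ℕ → Fin k) (a : Fin k) (n : ℕ) : ℕ :=
  ((Finset.range n).filter fun i => x i = a).card

/-- Color `a` has frequency `r` in `x`. -/
def HasFreq {k : ℕ} (x : ℕ → Fin k) (a : Fin k) (r : ℝ) : Prop :=
  Tendsto (fun n : ℕ => (cnt x a n : ℝ) / (n : ℝ)) atTop (𝓝 r)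

/-- `x` has frequency vector `f`. -/
def HasFreqVector {k : ℕ} (x : ℕ → Fin k) (f : Fin k → ℝ) : Prop :=
  ∀ a : Fin k, HasFreq x a (f a)

/-- A `k`-colored arena on node type `V`: a partition of the nodes given by the
predicate `isV1` (player 1's nodes; player 0 owns the rest), an initial node
and a serial set of colored edges `(source, color, target)`. -/
structure Arena (V : Type) (k : ℕ) where
  isV1 : V → Prop
  vini : V
  E : Set (V × Fin k × V)
  serial : ∀ v : V, ∃ e ∈ E, e.1 = v

namespace Arena

variable {V : Type} {k : ℕ}

/-- The last node of a finite history (the target of its last edge), `vini`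
for the empty history. -/
def lastNode (A : Arena V k) (l : List (V × Fin k × V)) : V :=
  (l.getLast?.map fun e => e.2.2).getD A.vini

/-- A valid finite history: a finite path from `vini` along edges of the arena. -/
def IsHistory (A : Arena V k) (l : List (V × Fin k × V)) : Prop :=
  (∀ e ∈ l, e ∈ A.E) ∧ List.Chain' (fun e f => e.2.2 = f.1) l ∧
    ∀ e, l.head? = some e → e.1 = A.vini

/-- `σ` is a strategy for the player owning the nodes satisfying `inP`:
on every valid history ending in a node of that player (including the empty
history when `vini` is such a node) it returns an edge of the arena extending
the history. -/
def IsStrategy (A : Arena V k) (inP : V → Prop)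
    (σ : List (V × Fin k × V) → V × Fin k × V) : Prop :=
  ∀ l, A.IsHistory l → inP (A.lastNode l) → σ l ∈ A.E ∧ (σ l).1 = A.lastNode l

/-- An infinite play: an infinite path along edges of the arena starting at `vini`. -/
def IsPlay (A : Arena V k) (p : ℕ → V × Fin k × V) : Prop :=
  (p 0).1 = A.vini ∧ ∀ i : ℕ, p i ∈ A.E ∧ (p i).2.2 = (p (i + 1)).1

/-- The play `p` is consistent with the strategy `σ` of the player owning the
nodes satisfying `inP`. -/
def Consistent (A : Arena V k) (inP : V → Prop)
    (σ : List (V × Fin k × V) → V × Fin k × V) (p : ℕ → V × Fin k × V) : Prop :=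
  (inP A.vini → p 0 = σ []) ∧
    ∀ i : ℕ, inP ((p i).2.2) → p (i + 1) = σ (List.ofFn fun j : Fin (i + 1) => p j)

/-- The color sequence of a play. -/
def colorSeq (p : ℕ → V × Fin k × V) : ℕ → Fin k := fun i => (p i).2.1

/-- Player 0's nodes. -/
def isV0 (A : Arena V k) : V → Prop := fun v => ¬ A.isV1 v

/-- `σ` is a winning strategy for player 0 w.r.t. the goal `W`. -/
def WinningFor0 (A : Arena V k) (W : Set (ℕ → Fin k))
    (σ : List (V × Fin k × V) → V × Fin k × V) : Prop :=
  A.IsStrategy A.isV0 σ ∧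
    ∀ p : ℕ → V × Fin k × V, A.IsPlay p → A.Consistent A.isV0 σ p → colorSeq p ∈ W

/-- `σ` is a winning strategy for player 1 w.r.t. the goal `W`. -/
def WinningFor1 (A : Arena V k) (W : Set (ℕ → Fin k))
    (σ : List (V × Fin k × V) → V × Fin k × V) : Prop :=
  A.IsStrategy A.isV1 σ ∧
    ∀ p : ℕ → V × Fin k × V, A.IsPlay p → A.Consistent A.isV1 σ p → colorSeq p ∉ W

/-- A strategy is memoryless if its value on a (valid) history only depends on
the last node of the history. -/
def Memoryless (A : Arena V k) (σ : List (V × Fin k × V) → V × Fin k × V) : Prop :=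
  ∀ l l', A.IsHistory l → A.IsHistory l' → A.lastNode l = A.lastNode l' → σ l = σ l'

end Arena

theorem cnt_succ' {k : ℕ} (x : ℕ → Fin k) (a : Fin k) (n : ℕ) :
    cnt x a (n+1) = cnt x a n + if x n = a then 1 else 0 := by
  unfold cnt
  rw [Finset.range_add_one, Finset.filter_insert]
  split_ifs with h
  · rw [Finset.card_insert_of_notMem (by simp)]
  · rfl

theorem cnt_le' {k : ℕ} (x : ℕ → Fin k) (a : Fin k) (n : ℕ) : cnt x a n ≤ n := by
  unfold cnt
  exact (Finset.card_filter_le _ _).trans (by simp)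

theorem hasFreq_iff_bd {k : ℕ} (x : ℕ → Fin k) (a : Fin k) (r : ℝ) :
    HasFreq x a r ↔ ∀ ε : ℝ, 0 < ε → ∃ C : ℝ, ∀ n : ℕ,
      |(cnt x a n : ℝ) - r * n| ≤ ε * n + C := by
  unfold HasFreq
  rw [Metric.tendsto_atTop]
  constructor
  · intro h ε hε
    obtain ⟨N, hN⟩ := h ε hε
    refine ⟨N + |r| * N, fun n => ?_⟩
    by_cases hn : N ≤ n ∧ 0 < n
    · have h1 := hN n hn.1
      have hpos : (0:ℝ) < n := by exact_mod_cast hn.2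
      rw [Real.dist_eq] at h1
      have h2 : (cnt x a n : ℝ) - r * n = (cnt x a n / n - r) * n := by field_simp
      rw [h2, abs_mul, abs_of_pos hpos]
      have : |(cnt x a n : ℝ) / n - r| * n ≤ ε * n := by gcongr
      have : 0 ≤ (N:ℝ) + |r| * N := by positivity
      linarith
    · have hle : n ≤ N := by omega
      have h1 : (cnt x a n : ℝ) ≤ n := by exact_mod_cast cnt_le' x a n
      have h3 : (n:ℝ) ≤ N := by exact_mod_cast hle
      have h2 : |r * n| ≤ |r| * N := by
        rw [abs_mul, Nat.abs_cast]; gcongr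
      have h4 := abs_sub (cnt x a n : ℝ) (r * n)
      rw [Nat.abs_cast] at h4
      have : 0 ≤ ε * n := by positivity
      linarith
  · intro h ε hε
    obtain ⟨C, hC⟩ := h (ε/2) (by positivity)
    obtain ⟨N, hN⟩ := exists_nat_gt (2 * C / ε)
    refine ⟨N + 1, fun n hn => ?_⟩
    have hpos : (0:ℝ) < n := by
      have : 0 < n := by omega
      exact_mod_cast this
    have hNn : (N:ℝ) ≤ n := by
      have : N ≤ n := by omega
      exact_mod_cast this
    rw [Real.dist_eq]
    have h2 : (cnt x a n : ℝ) / n - r = ((cnt x a n : ℝ) - r * n) / n := by field_simp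
    rw [h2, abs_div, Nat.abs_cast, div_lt_iff₀ hpos]
    have h3 : 2 * C < ε * n := by
      rw [div_lt_iff₀ hε] at hN
      nlinarith
    linarith [hC n]

theorem hasFreq_tail {k : ℕ} (x : ℕ → Fin k) (a : Fin k) (r : ℝ) (N : ℕ)
    (h : HasFreq x a r) : HasFreq (fun i => x (i + N)) a r := by
  rw [hasFreq_iff_bd] at h ⊢
  intro ε hε
  obtain ⟨C, hC⟩ := h ε hε
  refine ⟨ε * N + C + N + |r| * N, fun n => ?_⟩
  have key : cnt x a (n + N) = cnt (fun i => x (i + N)) a n + cnt x a N := by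
    induction n with
    | zero => simp [cnt]
    | succ n ih =>
      rw [show n + 1 + N = (n + N) + 1 by omega, cnt_succ', cnt_succ', ih]; ring
  have h1 := hC (n + N)
  have h2 : (cnt x a N : ℝ) ≤ N := by exact_mod_cast cnt_le' x a N
  have h3 : |r * N| = |r| * N := by rw [abs_mul, Nat.abs_cast]
  have h4 : (0:ℝ) ≤ cnt x a N := by positivity
  rw [key] at h1
  push_cast at h1
  have h5 := abs_le.mp h1
  have h6 := abs_le.mp h3.le
  rw [abs_le]
  constructor <;> nlinarith [h5.1, h5.2, h6.1, h6.2]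

open Classical in
theorem part_bd {k : ℕ} (x : ℕ → Fin k) (a : Fin k) (r : ℝ) (P : ℕ → Prop)
    (h : {i | P i}.Infinite → HasFreq (fun j => x (Nat.nth P j)) a r) (ε : ℝ) (hε : 0 < ε) :
    ∃ C : ℝ, ∀ n : ℕ,
      |(Nat.count (fun i => P i ∧ x i = a) n : ℝ) - r * Nat.count P n| ≤ ε * Nat.count P n + C := by
  by_cases hi : {i | P i}.Infinite
  · have h1 := (hasFreq_iff_bd _ _ _).1 (h hi) ε hε
    obtain ⟨C, hC⟩ := h1
    refine ⟨C, fun n => ?_⟩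
    have key : Nat.count (fun i => P i ∧ x i = a) n
        = cnt (fun j => x (Nat.nth P j)) a (Nat.count P n) := by
      induction n with
      | zero => simp [cnt]
      | succ n ih =>
        rw [Nat.count_succ, Nat.count_succ, ih]
        by_cases hp : P n
        · simp [hp, cnt_succ', Nat.nth_count hp]
        · simp [hp]
    rw [key]
    exact hC _
  · rw [Set.not_infinite] at hi
    obtain ⟨B, hB⟩ : ∃ B : ℕ, ∀ n, Nat.count P n ≤ B := by
      refine ⟨hi.toFinset.card, fun n => ?_⟩
      rw [Nat.count_eq_card_filter_range]
      apply Finset.card_le_card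
      intro i hi'
      simp at hi' ⊢
      exact hi'.2
    refine ⟨B + |r| * B, fun n => ?_⟩
    have h1 : Nat.count (fun i => P i ∧ x i = a) n ≤ Nat.count P n :=
      by
      rw [Nat.count_eq_card_filter_range, Nat.count_eq_card_filter_range]
      exact Finset.card_le_card (Finset.monotone_filter_right _ (fun i _ hi => hi.1))
    have h1' : (Nat.count (fun i => P i ∧ x i = a) n : ℝ) ≤ B := by
      exact_mod_cast h1.trans (hB n)
    have h2 : (Nat.count P n : ℝ) ≤ B := by exact_mod_cast hB n
    have h3 : |r * Nat.count P n| ≤ |r| * B := by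
      rw [abs_mul, Nat.abs_cast]; gcongr
    have h4 := abs_sub (Nat.count (fun i => P i ∧ x i = a) n : ℝ) (r * Nat.count P n)
    rw [Nat.abs_cast] at h4
    have : 0 ≤ ε * (Nat.count P n : ℝ) := by positivity
    linarith

open Classical in
theorem hasFreq_shuffle {k : ℕ} (x : ℕ → Fin k) (a : Fin k) (r : ℝ) (P Q : ℕ → Prop)
    (hPQ : ∀ i, Q i ↔ ¬ P i)
    (h : {i | P i}.Infinite → HasFreq (fun j => x (Nat.nth P j)) a r)
    (h' : {i | Q i}.Infinite → HasFreq (fun j => x (Nat.nth Q j)) a r) :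
    HasFreq x a r := by
  rw [hasFreq_iff_bd]
  intro ε hε
  obtain ⟨C, hC⟩ := part_bd x a r P h ε hε
  obtain ⟨D, hD⟩ := part_bd x a r Q h' ε hε
  refine ⟨C + D, fun n => ?_⟩
  have k1 : Nat.count P n + Nat.count Q n = n := by
    induction n with
    | zero => simp
    | succ n ih =>
      rw [Nat.count_succ, Nat.count_succ]
      by_cases hp : P n
      · have : ¬ Q n := by rw [hPQ]; simpa using hp
        simp [hp, this]; omega
      · have : Q n := by rw [hPQ]; exact hp
        simp [hp, this]; omega
  have k2 : Nat.count (fun i => P i ∧ x i = a) n + Nat.count (fun i => Q i ∧ x i = a) n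
      = cnt x a n := by
    clear k1
    induction n with
    | zero => simp [cnt]
    | succ n ih =>
      rw [Nat.count_succ, Nat.count_succ, cnt_succ', ← ih]
      by_cases hp : P n
      · have : ¬ Q n := by rw [hPQ]; simpa using hp
        simp [hp, this]; omega
      · have : Q n := by rw [hPQ]; exact hp
        simp [hp, this]; omega
  have k1' : (Nat.count P n : ℝ) + Nat.count Q n = n := by exact_mod_cast k1
  have k2' : (Nat.count (fun i => P i ∧ x i = a) n : ℝ) + Nat.count (fun i => Q i ∧ x i = a) n
      = cnt x a n := by exact_mod_cast k2
  rw [← k2', ← k1']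
  have h1 := abs_le.mp (hC n)
  have h2 := abs_le.mp (hD n)
  rw [abs_le]
  constructor <;> nlinarith [h1.1, h1.2, h2.1, h2.2]

namespace Arena

variable {V : Type} {k : ℕ}

/-- A finite- or infinite-memory machine playing for player 0. -/
structure Mach (A : Arena V k) (W : Set (ℕ → Fin k)) where
  M : Type
  m0 : M
  inv : M → Prop
  loc : M → V
  mv : M → V × Fin k × V
  upd : M → V × Fin k × V → M
  inv0 : inv m0
  loc0 : loc m0 = A.vini
  mv_ok : ∀ m, inv m → ¬ A.isV1 (loc m) → mv m ∈ A.E ∧ (mv m).1 = loc m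
  upd_ok : ∀ m e, inv m → e ∈ A.E → e.1 = loc m → (¬ A.isV1 (loc m) → e = mv m) →
    inv (upd m e) ∧ loc (upd m e) = e.2.2
  win : ∀ (m : ℕ → M) (e : ℕ → V × Fin k × V), (∀ i, inv (m i)) → (∀ i, e i ∈ A.E) →
    (∀ i, (e i).1 = loc (m i)) → (∀ i, ¬ A.isV1 (loc (m i)) → e i = mv (m i)) →
    (∀ i, m (i+1) = upd (m i) (e i)) → (fun i => (e i).2.1) ∈ W

def PosWin (A : Arena V k) (W : Set (ℕ → Fin k)) : Prop :=
  ∃ g : V → V × Fin k × V, (∀ v, A.isV1 v → g v ∈ A.E ∧ (g v).1 = v) ∧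
    ∀ p, A.IsPlay p → (∀ i, A.isV1 (p i).1 → p i = g (p i).1) → colorSeq p ∉ W

/-- Restrict the edges of an arena. -/
def restr (A : Arena V k) (E' : Set (V × Fin k × V)) (h : ∀ v : V, ∃ e ∈ E', e.1 = v) :
    Arena V k := ⟨A.isV1, A.vini, E', h⟩

theorem PosWin.of_restr {A : Arena V k} {W : Set (ℕ → Fin k)} {E' h} (hE : E' ⊆ A.E)
    (hw : (A.restr E' h).PosWin W) (h0 : ∀ e ∈ A.E, ¬ A.isV1 e.1 → e ∈ E') : A.PosWin W := by
  obtain ⟨g, hg, hw⟩ := hw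
  refine ⟨g, fun v hv => ⟨hE (hg v hv).1, (hg v hv).2⟩, fun p hp hc => hw p ⟨hp.1, fun i => ⟨?_, (hp.2 i).2⟩⟩ hc⟩
  show p i ∈ E'
  by_cases h1 : A.isV1 (p i).1
  · rw [hc i h1]; exact (hg _ h1).1
  · exact h0 _ (hp.2 i).1 h1

open Classical in
/-- Parallel composition of two machines at the node `v`. -/
noncomputable def Mach.merge {A : Arena V k} {f : Fin k → ℝ} {E1 E2 h1 h2}
    (hE1 : E1 ⊆ A.E) (hE2 : E2 ⊆ A.E) (v : V)
    (hs1 : ∀ e ∈ A.E, e.1 ≠ v → e ∈ E1) (hs2 : ∀ e ∈ A.E, e.1 ≠ v → e ∈ E2)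
    (hs : ∀ e ∈ A.E, e ∉ E1 → e ∈ E2) (hv : A.isV1 v)
    (X : (A.restr E1 h1).Mach {x | HasFreqVector x f})
    (Y : (A.restr E2 h2).Mach {x | HasFreqVector x f})
    (y : Y.M) (hy : Y.inv y) (hyv : Y.loc y = v) : A.Mach {x | HasFreqVector x f} where
  M := X.M × Y.M × Prop
  m0 := (X.m0, y, True)
  inv m := X.inv m.1 ∧ Y.inv m.2.1 ∧ (m.2.2 → Y.loc m.2.1 = v) ∧ (¬ m.2.2 → X.loc m.1 = v)
  loc m := if m.2.2 then X.loc m.1 else Y.loc m.2.1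
  mv m := if m.2.2 then X.mv m.1 else Y.mv m.2.1
  upd m e := if (e.1 = v ∧ e ∈ E1) ∨ (e.1 ≠ v ∧ m.2.2) then (X.upd m.1 e, m.2.1, True)
    else (m.1, Y.upd m.2.1 e, False)
  inv0 := ⟨X.inv0, hy, fun _ => hyv, fun h => absurd trivial h⟩
  loc0 := by
    simp only [if_true]
    exact X.loc0
  mv_ok := by
    rintro ⟨a, b, c⟩ ⟨ha, hb, hc, hd⟩ hn
    by_cases h : c
    · simp only [h, if_true] at hn ⊢
      exact ⟨hE1 (X.mv_ok a ha hn).1, (X.mv_ok a ha hn).2⟩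
    · simp only [h, if_false] at hn ⊢
      exact ⟨hE2 (Y.mv_ok b hb hn).1, (Y.mv_ok b hb hn).2⟩
  upd_ok := by
    rintro ⟨a, b, c⟩ e ⟨ha, hb, hc, hd⟩ he hl hn
    dsimp only at ha hb hc hd hl hn ⊢
    by_cases hev : e.1 = v
    · have hav : X.loc a = v := by
        by_cases h : c
        · simp only [h, if_true] at hl; rw [← hl, hev]
        · exact hd h
      have hbv : Y.loc b = v := by
        by_cases h : c
        · exact hc h
        · simp only [h, if_false] at hl; rw [← hl, hev]
      by_cases h1 : e ∈ E1
      · have := X.upd_ok a e ha h1 (by rw [hev, hav]) (fun h => absurd (hav ▸ hv) h)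
        simp [hev, h1, this, hb, hbv]
      · have := Y.upd_ok b e hb (hs e he h1) (by rw [hev, hbv]) (fun h => absurd (hbv ▸ hv) h)
        simp [hev, h1, this, ha, hav]
    · by_cases h : c
      · simp only [h, if_true] at hl hn
        have := X.upd_ok a e ha (hs1 e he hev) hl hn
        simp [hev, h, this, hb, hc h]
      · simp only [h, if_false] at hl hn
        have := Y.upd_ok b e hb (hs2 e he hev) hl hn
        simp [hev, h, this, ha, hd h]
  win := by
    intro m e hinv heE hloc hmv hupd
    -- facts about each step
    have stepX : ∀ i, (m (i+1)).2.2 → e i ∈ E1 ∧ (e i).1 = X.loc (m i).1 ∧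
        (¬ A.isV1 (X.loc (m i).1) → e i = X.mv (m i).1) ∧ (m (i+1)).1 = X.upd (m i).1 (e i) ∧
        (m (i+1)).2.1 = (m i).2.1 := by
      intro i hi
      rw [hupd i] at hi ⊢
      split_ifs at hi ⊢ with hcond
      · obtain ⟨ha, hb, hc, hd⟩ := hinv i
        have hl := hloc i
        have hn := hmv i
        rcases hcond with ⟨hev, h1⟩ | ⟨hev, h⟩
        · have hav : X.loc (m i).1 = v := by
            by_cases h : (m i).2.2
            · simp only [h, if_true] at hl; rw [← hl, hev]
            · exact hd h
          exact ⟨h1, by rw [hev, hav], fun h => absurd (hav ▸ hv) h, rfl, rfl⟩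
        · simp only [h, if_true] at hl hn
          exact ⟨hs1 _ (heE i) hev, hl, hn, rfl, rfl⟩
      · exact hi.elim
    have stepY : ∀ i, ¬ (m (i+1)).2.2 → e i ∈ E2 ∧ (e i).1 = Y.loc (m i).2.1 ∧
        (¬ A.isV1 (Y.loc (m i).2.1) → e i = Y.mv (m i).2.1) ∧
        (m (i+1)).2.1 = Y.upd (m i).2.1 (e i) ∧ (m (i+1)).1 = (m i).1 := by
      intro i hi
      rw [hupd i] at hi ⊢
      split_ifs at hi ⊢ with hcond
      · exact absurd trivial hi
      · obtain ⟨ha, hb, hc, hd⟩ := hinv i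
        have hl := hloc i
        have hn := hmv i
        by_cases hev : (e i).1 = v
        · have hbv : Y.loc (m i).2.1 = v := by
            by_cases h : (m i).2.2
            · exact hc h
            · simp only [h, if_false] at hl; rw [← hl, hev]
          have h1 : e i ∉ E1 := fun h => hcond (Or.inl ⟨hev, h⟩)
          exact ⟨hs _ (heE i) h1, by rw [hev, hbv], fun h => absurd (hbv ▸ hv) h, rfl, rfl⟩
        · have h : ¬ (m i).2.2 := fun h => hcond (Or.inr ⟨hev, h⟩)
          simp only [h, if_false] at hl hn
          exact ⟨hs2 _ (heE i) hev, hl, hn, rfl, rfl⟩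
    have const : ∀ {T : Type} (g : ℕ → T) (P : ℕ → Prop), {i | P i}.Infinite →
        (∀ i, ¬ P i → g (i+1) = g i) → ∀ j, g (Nat.nth P (j+1)) = g (Nat.nth P j + 1) := by
      intro T g P hP hg j
      have hlt : Nat.nth P j < Nat.nth P (j+1) := Nat.nth_strictMono hP (Nat.lt_succ_self j)
      have : ∀ n, Nat.nth P j + 1 ≤ n → n ≤ Nat.nth P (j+1) → g n = g (Nat.nth P j + 1) := by
        intro n hn
        induction n, hn using Nat.le_induction with
        | base => intro _; rfl
        | succ n hn ih =>
          intro hn'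
          rw [hg n, ih (by omega)]
          intro hPn
          have := Nat.le_nth_of_lt_nth_succ (p := P) (k := j) (a := n) (by omega) hPn
          omega
      exact this _ (by omega) le_rfl
    have HX : {i | (m (i+1)).2.2}.Infinite →
        HasFreqVector (fun j => (e (Nat.nth (fun i => (m (i+1)).2.2) j)).2.1) f := by
      intro hinf
      set P : ℕ → Prop := fun i => (m (i+1)).2.2 with hP
      have hmem : ∀ j, P (Nat.nth P j) := Nat.nth_mem_of_infinite hinf
      exact X.win (fun j => (m (Nat.nth P j)).1) (fun j => e (Nat.nth P j))
        (fun j => (hinv _).1) (fun j => (stepX _ (hmem j)).1) (fun j => (stepX _ (hmem j)).2.1)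
        (fun j => (stepX _ (hmem j)).2.2.1)
        (fun j => by
          rw [← (stepX _ (hmem j)).2.2.2.1]
          exact const (fun i => (m i).1) P hinf (fun i hi => (stepY i hi).2.2.2.2) j)
    have HY : {i | ¬ (m (i+1)).2.2}.Infinite →
        HasFreqVector (fun j => (e (Nat.nth (fun i => ¬ (m (i+1)).2.2) j)).2.1) f := by
      intro hinf
      set P : ℕ → Prop := fun i => ¬ (m (i+1)).2.2 with hP
      have hmem : ∀ j, P (Nat.nth P j) := Nat.nth_mem_of_infinite hinf
      exact Y.win (fun j => (m (Nat.nth P j)).2.1) (fun j => e (Nat.nth P j))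
        (fun j => (hinv _).2.1) (fun j => (stepY _ (hmem j)).1) (fun j => (stepY _ (hmem j)).2.1)
        (fun j => (stepY _ (hmem j)).2.2.1)
        (fun j => by
          rw [← (stepY _ (hmem j)).2.2.2.1]
          exact const (fun i => (m i).2.1) P hinf
            (fun i hi => (stepX i (not_not.mp hi)).2.2.2.2) j)
    intro a
    exact hasFreq_shuffle _ a (f a) (fun i => (m (i+1)).2.2) (fun i => ¬ (m (i+1)).2.2)
      (fun i => Iff.rfl) (fun h => HX h a) (fun h => HY h a)

theorem mach_or_pos [Fintype V] (f : Fin k → ℝ) : ∀ (n : ℕ) (A : Arena V k), A.E.ncard = n →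
    Nonempty (A.Mach {x | HasFreqVector x f}) ∨ A.PosWin {x | HasFreqVector x f} := by
  intro n
  induction n using Nat.strong_induction_on with
  | _ n ih =>
  intro A hn
  by_cases hb : ∀ e ∈ A.E, ∀ e' ∈ A.E, A.isV1 e.1 → e.1 = e'.1 → e = e'
  · by_cases hp : ∃ p, A.IsPlay p ∧ HasFreqVector (colorSeq p) f
    · left
      obtain ⟨p, hp, hw⟩ := hp
      refine ⟨⟨ℕ, 0, fun _ => True, fun i => (p i).1, p, fun i _ => i + 1, trivial, hp.1,
        fun m _ _ => ⟨(hp.2 m).1, rfl⟩, ?_, ?_⟩⟩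
      · intro m e _ he hl hm
        refine ⟨trivial, ?_⟩
        have : e = p m := by
          by_cases h : A.isV1 (p m).1
          · exact hb e he _ (hp.2 m).1 (hl ▸ h) hl
          · exact hm h
        rw [this]; exact (hp.2 m).2.symm
      · intro m e _ he hl hm hu a
        have hmi : ∀ i, m i = i + m 0 := by
          intro i
          induction i with
          | zero => simp
          | succ i ih => rw [hu, ih]; omega
        have : ∀ i, e i = p (i + m 0) := by
          intro i
          rw [← hmi i]
          by_cases h : A.isV1 (p (m i)).1
          · exact hb _ (he i) _ (hp.2 _).1 ((hl i) ▸ h) (hl i)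
          · exact hm i h
        simp only [this]
        exact hasFreq_tail (colorSeq p) a (f a) (m 0) (hw a)
    · right
      choose g hg using A.serial
      exact ⟨g, fun v _ => hg v, fun p hp' _ hw => hp ⟨p, hp', hw⟩⟩
  · push Not at hb
    obtain ⟨e1, he1, e2, he2, hv, h12, hne⟩ := hb
    have hfin : A.E.Finite := Set.toFinite _
    have hs1 : A.E \ {e2} ⊆ A.E := Set.sdiff_subset
    have hs2 : {e | e ∈ A.E ∧ (e.1 = e2.1 → e = e2)} ⊆ A.E := fun e h => h.1
    have ser1 : ∀ v : V, ∃ e ∈ A.E \ {e2}, e.1 = v := by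
      intro v
      obtain ⟨e, he, hev⟩ := A.serial v
      by_cases h : e = e2
      · exact ⟨e1, ⟨he1, hne⟩, by rw [h12, ← h, hev]⟩
      · exact ⟨e, ⟨he, h⟩, hev⟩
    have ser2 : ∀ v : V, ∃ e ∈ {e | e ∈ A.E ∧ (e.1 = e2.1 → e = e2)}, e.1 = v := by
      intro v
      obtain ⟨e, he, hev⟩ := A.serial v
      by_cases h : e.1 = e2.1
      · exact ⟨e2, ⟨he2, fun _ => rfl⟩, by rw [← h, hev]⟩
      · exact ⟨e, ⟨he, fun h' => absurd h' h⟩, hev⟩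
    have c1 : (A.E \ {e2}).ncard < n := by
      rw [← hn]
      exact Set.ncard_lt_ncard ⟨hs1, fun h => (h he2).2 rfl⟩ hfin
    have c2 : {e | e ∈ A.E ∧ (e.1 = e2.1 → e = e2)}.ncard < n := by
      rw [← hn]
      exact Set.ncard_lt_ncard ⟨hs2, fun h => hne ((h he1).2 h12)⟩ hfin
    rcases ih _ c1 (A.restr _ ser1) rfl with ⟨⟨X⟩⟩ | hP
    swap
    · right
      refine hP.of_restr hs1 fun e he h0 => ⟨he, ?_⟩
      rintro rfl
      exact h0 (h12 ▸ hv)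
    rcases ih _ c2 (A.restr _ ser2) rfl with ⟨⟨Y⟩⟩ | hP
    swap
    · right
      refine hP.of_restr hs2 fun e he h0 => ⟨he, fun h => ?_⟩
      exact absurd (h12 ▸ hv) (h ▸ h0)
    left
    by_cases hy : ∃ y, Y.inv y ∧ Y.loc y = e2.1
    · obtain ⟨y, hy, hyv⟩ := hy
      refine ⟨Mach.merge hs1 hs2 e2.1 ?_ ?_ ?_ (h12 ▸ hv) X Y y hy hyv⟩
      · rintro e he h
        refine ⟨he, ?_⟩
        rintro rfl
        exact h rfl
      · exact fun e he h => ⟨he, fun h' => absurd h' h⟩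
      · intro e he h
        have : e = e2 := by
          by_contra h'
          exact h ⟨he, h'⟩
        exact ⟨he, fun _ => this⟩
    · push Not at hy
      refine ⟨⟨Y.M, Y.m0, Y.inv, Y.loc, Y.mv, Y.upd, Y.inv0, Y.loc0, ?_, ?_, ?_⟩⟩
      · intro m hm h
        exact ⟨hs2 (Y.mv_ok m hm h).1, (Y.mv_ok m hm h).2⟩
      · intro m e hm he hl hmv
        exact Y.upd_ok m e hm ⟨he, fun h => absurd (hl ▸ h) (hy m hm)⟩ hl hmv
      · intro m e hm he hl hmv hu
        exact Y.win m e hm (fun i => ⟨he i, fun h => absurd (hl i ▸ h) (hy _ (hm i))⟩) hl hmv hu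

theorem ofFn_snoc (p : ℕ → V × Fin k × V) (i : ℕ) :
    (List.ofFn fun j : Fin (i + 1) => p j) = (List.ofFn fun j : Fin i => p j) ++ [p i] := by
  rw [List.ofFn_succ', List.concat_eq_append]
  simp

theorem lastNode_snoc (A : Arena V k) (l : List (V × Fin k × V)) (e) :
    A.lastNode (l ++ [e]) = e.2.2 := by
  simp [lastNode]

theorem lastNode_play {A : Arena V k} {p : ℕ → V × Fin k × V} (hp : A.IsPlay p) (i : ℕ) :
    A.lastNode (List.ofFn fun j : Fin i => p j) = (p i).1 := by
  cases i with
  | zero => simp [lastNode, hp.1]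
  | succ i => rw [ofFn_snoc, lastNode_snoc]; exact (hp.2 i).2

theorem consistent_iff {A : Arena V k} {p : ℕ → V × Fin k × V} (hp : A.IsPlay p)
    (inP : V → Prop) (σ : List (V × Fin k × V) → V × Fin k × V) :
    A.Consistent inP σ p ↔ ∀ i, inP (p i).1 → p i = σ (List.ofFn fun j : Fin i => p j) := by
  constructor
  · rintro ⟨h0, h⟩ i hi
    cases i with
    | zero => rw [hp.1] at hi; simpa using h0 hi
    | succ i => rw [← (hp.2 i).2] at hi; exact h i hi
  · intro h
    refine ⟨fun h0 => ?_, fun i hi => ?_⟩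
    · simpa using h 0 (by rw [hp.1]; exact h0)
    · exact h (i+1) (by rw [← (hp.2 i).2]; exact hi)

theorem Mach.toStrat {A : Arena V k} {W : Set (ℕ → Fin k)} (X : A.Mach W) :
    ∃ σ, A.WinningFor0 W σ := by
  classical
  choose g hg using A.serial
  let st : List (V × Fin k × V) → X.M := fun l => l.foldl X.upd X.m0
  let σ : List (V × Fin k × V) → V × Fin k × V := fun l =>
    if X.mv (st l) ∈ A.E ∧ (X.mv (st l)).1 = A.lastNode l then X.mv (st l) else g (A.lastNode l)
  refine ⟨σ, ?_, ?_⟩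
  · intro l _ _
    simp only [σ]
    split_ifs with h
    · exact h
    · exact hg _
  · intro p hp hc
    rw [consistent_iff hp] at hc
    let m : ℕ → X.M := fun i => st (List.ofFn fun j : Fin i => p j)
    have hu : ∀ i, m (i+1) = X.upd (m i) (p i) := by
      intro i
      simp only [m, st]
      rw [ofFn_snoc, List.foldl_append]
      rfl
    have hmv : ∀ i, X.inv (m i) → X.loc (m i) = (p i).1 → ¬ A.isV1 (X.loc (m i)) →
        p i = X.mv (m i) := by
      intro i hi hl hn
      have h1 := X.mv_ok _ hi hn
      rw [hc i (by rw [← hl]; exact hn)]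
      simp only [σ]
      rw [if_pos]
      rw [lastNode_play hp]
      exact ⟨h1.1, h1.2.trans hl⟩
    have hinv : ∀ i, X.inv (m i) ∧ X.loc (m i) = (p i).1 := by
      intro i
      induction i with
      | zero =>
        have : m 0 = X.m0 := by simp [m, st]
        rw [this, hp.1]
        exact ⟨X.inv0, X.loc0⟩
      | succ i ih =>
        have := X.upd_ok (m i) (p i) ih.1 (hp.2 i).1 ih.2.symm (hmv i ih.1 ih.2)
        rw [hu, ← (hp.2 i).2]
        exact this
    exact X.win m p (fun i => (hinv i).1) (fun i => (hp.2 i).1) (fun i => (hinv i).2.symm)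
      (fun i => hmv i (hinv i).1 (hinv i).2) hu

theorem PosWin.toStrat {A : Arena V k} {W : Set (ℕ → Fin k)} (h : A.PosWin W) :
    ∃ τ, A.WinningFor1 W τ ∧ A.Memoryless τ := by
  obtain ⟨g, hg, hw⟩ := h
  refine ⟨fun l => g (A.lastNode l), ⟨fun l _ hl => hg _ hl, fun p hp hc => hw p hp ?_⟩, ?_⟩
  · rw [consistent_iff hp] at hc
    intro i hi
    have := hc i hi
    rwa [lastNode_play hp] at this
  · intro l l' _ _ h
    simp only [h]

theorem not_both {A : Arena V k} {W : Set (ℕ → Fin k)} {σ τ}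
    (hσ : A.WinningFor0 W σ) (hτ : A.WinningFor1 W τ) : False := by
  classical
  let nx : List (V × Fin k × V) → V × Fin k × V := fun l =>
    if A.isV1 (A.lastNode l) then τ l else σ l
  let h : ℕ → List (V × Fin k × V) := fun n => Nat.rec [] (fun _ l => l ++ [nx l]) n
  let p : ℕ → V × Fin k × V := fun n => nx (h n)
  have hs : ∀ n, h (n+1) = h n ++ [p n] := fun n => rfl
  have hh : ∀ n, h n = List.ofFn fun j : Fin n => p j := by
    intro n
    induction n with
    | zero => simp [h]
    | succ n ih => rw [ofFn_snoc, ← ih, hs]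
  have hnx : ∀ l, A.IsHistory l → nx l ∈ A.E ∧ (nx l).1 = A.lastNode l := by
    intro l hl
    simp only [nx]
    split_ifs with h1
    · exact hτ.1 l hl h1
    · exact hσ.1 l hl h1
  have hist : ∀ n, A.IsHistory (h n) := by
    intro n
    induction n with
    | zero => exact ⟨by simp [h], List.isChain_nil, by simp [h]⟩
    | succ n ih =>
      have h1 := hnx _ ih
      rw [hs]
      refine ⟨?_, ?_, ?_⟩
      · intro e he
        rcases List.mem_append.1 he with he | he
        · exact ih.1 e he
        · rw [List.mem_singleton.1 he]; exact h1.1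
      · refine List.isChain_append.2 ⟨ih.2.1, List.isChain_singleton _, ?_⟩
        intro x hx y hy
        simp at hy
        subst hy
        show x.2.2 = (nx (h n)).1
        rw [h1.2]
        simp only [lastNode]
        rw [Option.mem_def.1 hx]
        rfl
      · intro e he
        rcases Classical.em (h n = []) with hn | hn
        · rw [hn] at he
          simp at he
          rw [← he]
          show (nx (h n)).1 = _
          rw [h1.2, hn]; rfl
        · rw [List.head?_append_of_ne_nil (h n) hn] at he
          exact ih.2.2 e he
  have hp : A.IsPlay p := by
    refine ⟨(hnx _ (hist 0)).2, fun i => ⟨(hnx _ (hist i)).1, ?_⟩⟩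
    rw [show (p (i+1)).1 = A.lastNode (h (i+1)) from (hnx _ (hist (i+1))).2, hs, lastNode_snoc]
  refine hτ.2 p hp ((consistent_iff hp _ _).2 ?_) (hσ.2 p hp ((consistent_iff hp _ _).2 ?_))
  · intro i hi
    rw [← lastNode_play hp, ← hh] at hi
    rw [← hh]
    show nx (h i) = _
    simp only [nx]
    rw [if_pos hi]
  · intro i hi
    rw [← lastNode_play hp, ← hh] at hi
    rw [← hh]
    show nx (h i) = _
    simp only [nx]
    rw [if_neg hi]

end Arena

theorem freq_goal_determined_and_memoryless_for_player1
    {k : ℕ} (hk : 1 ≤ k) {V : Type} [Fintype V] (A : Arena V k)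
    (f : Fin k → ℝ) (hf : ∑ a : Fin k, f a = 1) :
    ((∃ σ, A.WinningFor0 {x | HasFreqVector x f} σ) ∨
        (∃ τ, A.WinningFor1 {x | HasFreqVector x f} τ)) ∧
      ((∃ τ, A.WinningFor1 {x | HasFreqVector x f} τ) →
        ∃ τ, A.WinningFor1 {x | HasFreqVector x f} τ ∧ A.Memoryless τ) := by
  rcases Arena.mach_or_pos f _ A rfl with ⟨⟨X⟩⟩ | hP
  · obtain ⟨σ, hσ⟩ := X.toStrat
    exact ⟨Or.inl ⟨σ, hσ⟩, fun ⟨τ, hτ⟩ => (Arena.not_both hσ hτ).elim⟩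
  · have h := hP.toStrat
    obtain ⟨τ, hτ, hm⟩ := h
    exact ⟨Or.inr ⟨τ, hτ⟩, fun _ => ⟨τ, hτ, hm⟩⟩
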